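/- Let α₀ = 2/(3n₀), fix α ∈ (0,α₀], and set T₁ = 3/α. Let (w₁,τ₁) and (w₂,τ₂) be pairs in Sʰ(M,n₀,n₀₀) that solve BVPʰ with the SAME boundary data (g₀,g₁,g₂). Then w₁,ij(z,t) = w₂,ij(z,t) for all 1 ≤ i,j ≤ N, z ∈ [0,1] and t ∈ [0,1/α], τ₁,ij(z) = τ₂,ij(z) for all 1 ≤ i,j ≤ N and z ∈ [0,1], and consequently |∇ʰτ₁,ij(z)| = |∇ʰτ₂,ij(z)| for all such i,j,z. (The uniqueness statement that follows immediately from the Hölder stability estimate of Theorem 6.1.) -/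

import Mathlib

/-!
The difference `W = w₁ - w₂`, `T = τ₁ - τ₂` of two solutions has zero data at `z = 0` and on the
lateral boundary. With `z` as the evolution variable, the first equation, multiplied out over the
finitely many grid nodes, is a hyperbolic system
`∂_z P - 2 a ∂_t P = (lower order)`, where `P = ∂_z W` and `a = ∂_zτ₁ ∈ [1, n₀]`. Its
characteristics are `t + 2 τ₁ = const` and `t = const`. Along the former `P` is transported; along
the latter, with `Q = ∂_t W`, the combination `2 a Q - P` satisfies
`∂_z (2 a Q - P) = (lower order)`, since `∂_z Q = ∂_t P`. The lower order terms are bounded by a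
constant times the size of `W`, `Q`, `T`, `∂_z T` at `(z, t)` and of `W`, `P` at `(z, 0)`; the traces
at `t = 0` come from `ln w(·, 0)`, and the a priori bounds defining the set `Sʰ` (notably
`w(·, 0) ≥ A₀ > 0`) make the dependence Lipschitz.

The region `0 ≤ t ≤ T₁ - 2 n₀ z` contains the backward characteristics of each of its points, as
well as the segment `t = 0`. So a bound `K exp (lam z)` there on all unknowns improves to
`(K / 2) exp (lam z)` after integration along characteristics, once `lam` is large; iterating, all
unknowns vanish. This is `propagation`. The condition `α ≤ 2 / (3 n₀)` gives
`1 / α ≤ T₁ - 2 n₀`, so that the region contains `[0, 1] × [0, 1 / α]`. The Lipschitz estimates for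
the lower order terms are `dot_close`, `rhsW_close` and `rhsT_close`.
-/

/- STATEMENT 17: the uniqueness statement for BVPʰ that follows immediately from
   the Hölder stability estimate of Theorem 6.1. -/

open Real Set

noncomputable section

/-- Discrete second difference in `x`. -/
def ddx (h : ℝ) (v : ℕ → ℕ → ℝ → ℝ → ℝ) (i j : ℕ) (z t : ℝ) : ℝ :=
  (v (i + 1) j z t - 2 * v i j z t + v (i - 1) j z t) / h ^ 2

/-- Discrete second difference in `y`. -/
def ddy (h : ℝ) (v : ℕ → ℕ → ℝ → ℝ → ℝ) (i j : ℕ) (z t : ℝ) : ℝ :=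
  (v i (j + 1) z t - 2 * v i j z t + v i (j - 1) z t) / h ^ 2

/-- `∂_z v`. -/
def dzv (v : ℕ → ℕ → ℝ → ℝ → ℝ) (i j : ℕ) (z t : ℝ) : ℝ :=
  deriv (fun z' => v i j z' t) z

/-- `∂_z² v`. -/
def dzzv (v : ℕ → ℕ → ℝ → ℝ → ℝ) (i j : ℕ) (z t : ℝ) : ℝ :=
  iteratedDeriv 2 (fun z' => v i j z' t) z

/-- `∂_t v`. -/
def dtv (v : ℕ → ℕ → ℝ → ℝ → ℝ) (i j : ℕ) (z t : ℝ) : ℝ :=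
  deriv (fun t' => v i j z t') t

/-- `∂_z∂_t v`. -/
def dztv (v : ℕ → ℕ → ℝ → ℝ → ℝ) (i j : ℕ) (z t : ℝ) : ℝ :=
  deriv (fun t' => deriv (fun z' => v i j z' t') z) t

/-- The semi-discrete Laplacian `Δʰv = ∂ₓ²v + ∂_y²v + ∂_z²v`. -/
def lapH (h : ℝ) (v : ℕ → ℕ → ℝ → ℝ → ℝ) (i j : ℕ) (z t : ℝ) : ℝ :=
  ddx h v i j z t + ddy h v i j z t + dzzv v i j z t

/-- The semi-discrete gradient `∇ʰτ = (∂ₓτ, ∂_yτ, ∂_zτ)` of a time-independent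
grid function. -/
def gradH (h : ℝ) (τ : ℕ → ℕ → ℝ → ℝ) (i j : ℕ) (z : ℝ) : Fin 3 → ℝ :=
  ![(τ (i - 1) j z - τ (i + 1) j z) / (2 * h),
    (τ i (j - 1) z - τ i (j + 1) z) / (2 * h),
    deriv (τ i j) z]

/-- The Euclidean length `|∇ʰτ|`. -/
def gradHnorm (h : ℝ) (τ : ℕ → ℕ → ℝ → ℝ) (i j : ℕ) (z : ℝ) : ℝ :=
  Real.sqrt (∑ k : Fin 3, (gradH h τ i j z k) ^ 2)

/-- The semi-discrete Laplacian of a time-independent grid function. -/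
def lapHz (h : ℝ) (τ : ℕ → ℕ → ℝ → ℝ) (i j : ℕ) (z : ℝ) : ℝ :=
  (τ (i + 1) j z - 2 * τ i j z + τ (i - 1) j z) / h ^ 2
    + (τ i (j + 1) z - 2 * τ i j z + τ i (j - 1) z) / h ^ 2
    + iteratedDeriv 2 (τ i j) z

/-- Euclidean dot product on `Fin 3 → ℝ`. -/
def dotH (a b : Fin 3 → ℝ) : ℝ := ∑ k : Fin 3, a k * b k

/-- `‖v‖²_{L₂ʰ(Θ_{h,T₁})}`. -/
def normThetaSq (h T₁ : ℝ) (N : ℕ) (v : ℕ → ℕ → ℝ → ℝ → ℝ) : ℝ :=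
  (∑ j ∈ Finset.range (N + 2),
      h * ∫ t in (0:ℝ)..T₁, ∫ z in (0:ℝ)..1,
        ((v 0 j z t) ^ 2 + (v (N + 1) j z t) ^ 2))
    + ∑ i ∈ Finset.range (N + 2),
        h * ∫ t in (0:ℝ)..T₁, ∫ z in (0:ℝ)..1,
          ((v i 0 z t) ^ 2 + (v i (N + 1) z t) ^ 2)

/-- `‖w‖²_{L₂ʰ(Γ_{h,T₁})}` for a grid function `w i j t` on the boundary `z = 0`. -/
def normGammaL2Sq (h T₁ : ℝ) (N : ℕ) (w : ℕ → ℕ → ℝ → ℝ) : ℝ :=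
  ∑ i ∈ Finset.Icc 1 N, ∑ j ∈ Finset.Icc 1 N, h * ∫ t in (0:ℝ)..T₁, (w i j t) ^ 2

/-- `‖w‖²_{H^{1,h}(Γ_{h,T₁})}`. -/
def normGammaH1Sq (h T₁ : ℝ) (N : ℕ) (w : ℕ → ℕ → ℝ → ℝ) : ℝ :=
  ∑ i ∈ Finset.Icc 1 N, ∑ j ∈ Finset.Icc 1 N,
    h ^ 2 * ∫ t in (0:ℝ)..T₁, ((deriv (w i j) t) ^ 2 + (w i j t) ^ 2)

/-- `‖w‖²_{L₂ʰ(Ω_h)}` for a grid function `w i j z`. -/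
def normOmegaL2Sq (h : ℝ) (N : ℕ) (w : ℕ → ℕ → ℝ → ℝ) : ℝ :=
  ∑ i ∈ Finset.Icc 1 N, ∑ j ∈ Finset.Icc 1 N, h ^ 2 * ∫ z in (0:ℝ)..1, (w i j z) ^ 2

/-- `‖w‖²_{H^{1,h}(Ω_h)}` for a grid function `w i j z`. -/
def normOmegaH1Sq (h : ℝ) (N : ℕ) (w : ℕ → ℕ → ℝ → ℝ) : ℝ :=
  ∑ i ∈ Finset.Icc 1 N, ∑ j ∈ Finset.Icc 1 N,
    h ^ 2 * ∫ z in (0:ℝ)..1, ((deriv (w i j) z) ^ 2 + (w i j z) ^ 2)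

/-- `‖v‖²_{H^{1,h}(Q_{h,T})}`. -/
def normQH1Sq (h T : ℝ) (N : ℕ) (v : ℕ → ℕ → ℝ → ℝ → ℝ) : ℝ :=
  ∑ i ∈ Finset.Icc 1 N, ∑ j ∈ Finset.Icc 1 N,
    h ^ 2 * ∫ t in (0:ℝ)..T, ∫ z in (0:ℝ)..1,
      ((dzv v i j z t) ^ 2 + (dtv v i j z t) ^ 2 + (v i j z t) ^ 2)

/-- Membership in the a priori set `Sʰ(M,n₀,n₀₀)` (with `A₀` the lower bound on
`w(·,0)`). -/
def InS (N : ℕ) (h T₁ M n₀ A₀ : ℝ)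
    (w : ℕ → ℕ → ℝ → ℝ → ℝ) (τ : ℕ → ℕ → ℝ → ℝ) : Prop :=
  (∀ i ≤ N + 1, ∀ j ≤ N + 1, ContDiff ℝ 2 (fun p : ℝ × ℝ => w i j p.1 p.2)) ∧
  (∀ i ≤ N + 1, ∀ j ≤ N + 1, ContDiff ℝ 2 (τ i j)) ∧
  (∀ i, 1 ≤ i → i ≤ N → ∀ j, 1 ≤ j → j ≤ N → ∀ z ∈ Icc (0:ℝ) 1,
      gradHnorm h τ i j z ≤ n₀) ∧
  (∀ i ≤ N + 1, ∀ j ≤ N + 1, ∀ z ∈ Icc (0:ℝ) 1,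
      1 ≤ deriv (τ i j) z ∧ deriv (τ i j) z ≤ n₀) ∧
  (∀ i ≤ N + 1, ∀ j ≤ N + 1, ∀ z ∈ Icc (0:ℝ) 1, ∀ t ∈ Icc (0:ℝ) T₁,
      |w i j z t| ≤ M ∧ |dzv w i j z t| ≤ M ∧ |dzzv w i j z t| ≤ M ∧
        |dztv w i j z t| ≤ M) ∧
  (∀ i ≤ N + 1, ∀ j ≤ N + 1, ∀ z ∈ Icc (0:ℝ) 1,
      |τ i j z| ≤ M ∧ |deriv (τ i j) z| ≤ M ∧ |iteratedDeriv 2 (τ i j) z| ≤ M) ∧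
  (∀ i ≤ N + 1, ∀ j ≤ N + 1, ∀ z ∈ Icc (0:ℝ) 1, A₀ ≤ w i j z 0)

/-- The pair `(w,τ)` solves the boundary value problem `BVPʰ` with data `(g₀,g₁,g₂)`. -/
def SolvesBVP (N : ℕ) (h T₁ : ℝ)
    (w : ℕ → ℕ → ℝ → ℝ → ℝ) (τ : ℕ → ℕ → ℝ → ℝ)
    (g₀ g₁ : ℕ → ℕ → ℝ → ℝ) (g₂ : ℕ → ℕ → ℝ → ℝ → ℝ) : Prop :=
  (∀ i, 1 ≤ i → i ≤ N → ∀ j, 1 ≤ j → j ≤ N → ∀ z ∈ Ioo (0:ℝ) 1, ∀ t ∈ Ioo (0:ℝ) T₁,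
      lapH h w i j z t - 2 * deriv (τ i j) z * dztv w i j z t
        - 2 * ((dtv w (i - 1) j z t - dtv w (i + 1) j z t) / (2 * h))
            * ((τ (i - 1) j z - τ (i + 1) j z) / (2 * h))
        - 2 * ((dtv w i (j - 1) z t - dtv w i (j + 1) z t) / (2 * h))
            * ((τ i (j - 1) z - τ i (j + 1) z) / (2 * h))
        + 2 * dtv w i j z t *
            dotH (gradH h (fun i' j' z' => Real.log (w i' j' z' 0)) i j z)
                 (gradH h τ i j z) = 0) ∧
  (∀ i, 1 ≤ i → i ≤ N → ∀ j, 1 ≤ j → j ≤ N → ∀ z ∈ Ioo (0:ℝ) 1,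
      lapHz h τ i j z
        + 2 * dotH (gradH h (fun i' j' z' => Real.log (w i' j' z' 0)) i j z)
                   (gradH h τ i j z) = 0) ∧
  (∀ i, 1 ≤ i → i ≤ N → ∀ j, 1 ≤ j → j ≤ N → ∀ t ∈ Icc (0:ℝ) T₁,
      w i j 0 t = g₀ i j t ∧ dzv w i j 0 t = g₁ i j t) ∧
  (∀ i ≤ N + 1, ∀ j ≤ N + 1, (i = 0 ∨ i = N + 1 ∨ j = 0 ∨ j = N + 1) →
      ∀ z ∈ Icc (0:ℝ) 1, ∀ t ∈ Icc (0:ℝ) T₁, w i j z t = g₂ i j z t) ∧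
  (∀ i, 1 ≤ i → i ≤ N → ∀ j, 1 ≤ j → j ≤ N →
      τ i j 0 = 0 ∧ deriv (τ i j) 0 = 1) ∧
  (∀ i ≤ N + 1, ∀ j ≤ N + 1, (i = 0 ∨ i = N + 1 ∨ j = 0 ∨ j = N + 1) →
      ∀ z ∈ Icc (0:ℝ) 1, τ i j z = z)

end

/-! ### Integration along characteristics -/

/-- A bound by a growing exponential improves by `1 / lam` under integration. -/
lemma growth {φ φ' : ℝ → ℝ} {z B lam : ℝ} (hz : 0 ≤ z) (hlam : 0 < lam) (hB : 0 ≤ B)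
    (hcont : ContinuousOn φ (Icc 0 z))
    (hd : ∀ x ∈ Ioo 0 z, HasDerivAt φ (φ' x) x)
    (hb : ∀ x ∈ Ioo 0 z, |φ' x| ≤ B * Real.exp (lam * x)) (h0 : φ 0 = 0) :
    |φ z| ≤ B / lam * Real.exp (lam * z) := by
  have hE : ∀ x : ℝ, HasDerivAt (fun x => B / lam * Real.exp (lam * x))
      (B * Real.exp (lam * x)) x := by
    intro x
    have h := (((hasDerivAt_id' x).const_mul lam).exp).const_mul (B / lam)
    exact h.congr_deriv (by rw [mul_one]; field_simp)
  have hEc : ContinuousOn (fun x => B / lam * Real.exp (lam * x)) (Icc 0 z) :=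
    fun x _ => (hE x).continuousAt.continuousWithinAt
  have hBl : 0 ≤ B / lam := by positivity
  have m1 : MonotoneOn (fun x => B / lam * Real.exp (lam * x) - φ x) (Icc 0 z) := by
    apply monotoneOn_of_deriv_nonneg (convex_Icc 0 z) (hEc.sub hcont)
    · rw [interior_Icc]
      exact fun x hx => ((hE x).sub (hd x hx)).differentiableAt.differentiableWithinAt
    · rw [interior_Icc]
      intro x hx
      have := ((hE x).sub (hd x hx)).deriv
      erw [this]
      linarith [(abs_le.1 (hb x hx)).2]
  have m2 : MonotoneOn (fun x => B / lam * Real.exp (lam * x) + φ x) (Icc 0 z) := by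
    apply monotoneOn_of_deriv_nonneg (convex_Icc 0 z) (hEc.add hcont)
    · rw [interior_Icc]
      exact fun x hx => ((hE x).add (hd x hx)).differentiableAt.differentiableWithinAt
    · rw [interior_Icc]
      intro x hx
      have := ((hE x).add (hd x hx)).deriv
      erw [this]
      linarith [(abs_le.1 (hb x hx)).1]
  have a1 := m1 (left_mem_Icc.2 hz) (right_mem_Icc.2 hz) hz
  have a2 := m2 (left_mem_Icc.2 hz) (right_mem_Icc.2 hz) hz
  simp only [h0, mul_zero, Real.exp_zero] at a1 a2
  rw [abs_le]
  constructor <;> linarith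

/-- Finitely many continuous functions have a common bound on `[0, 1] × [0, L]`. -/
lemma unif_bdd {ι : Type*} (S : Finset ι) (f : ι → ℝ × ℝ → ℝ) (hf : ∀ k ∈ S, Continuous (f k))
    (L : ℝ) : ∃ B, 0 ≤ B ∧ ∀ k ∈ S, ∀ z ∈ Icc (0:ℝ) 1, ∀ t ∈ Icc (0:ℝ) L, |f k (z, t)| ≤ B := by
  have h1 : ∀ k, ∃ B, 0 ≤ B ∧ (k ∈ S → ∀ z ∈ Icc (0:ℝ) 1, ∀ t ∈ Icc (0:ℝ) L,
      |f k (z, t)| ≤ B) := by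
    intro k
    by_cases hk : k ∈ S
    · obtain ⟨B, hB⟩ := ((isCompact_Icc (a := (0:ℝ)) (b := 1)).prod
        (isCompact_Icc (a := (0:ℝ)) (b := L))).exists_bound_of_continuousOn
          (hf k hk).continuousOn
      refine ⟨|B|, abs_nonneg B, fun _ z hz t ht => ?_⟩
      exact (hB (z, t) ⟨hz, ht⟩).trans (le_abs_self B)
    · exact ⟨0, le_rfl, fun h => absurd h hk⟩
  choose B hB0 hB using h1
  refine ⟨∑ k ∈ S, B k, Finset.sum_nonneg fun k _ => hB0 k, fun k hk z hz t ht => ?_⟩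
  exact (hB k hk z hz t ht).trans (Finset.single_le_sum (fun l _ => hB0 l) hk)

/-- Uniqueness for the Cauchy problem at `z = 0` of the differenced system, on the region
`0 ≤ t ≤ L - 2 c z`. Here `P = ∂_z W`, `Q = ∂_t W` (used only through `∂_z Q = ∂_t P`),
`T1 = T'`, `T2 = T''`, `a = σ'`, and `P'` is the Fréchet derivative of `P`. The hypotheses `hpde`
and `hode` say that the source terms are controlled by the largest of the unknowns over all `l ∈ S`,
traces at `t = 0` included. -/
theorem propagation {ι : Type*} (S : Finset ι) (L c C A : ℝ) (hc : 0 ≤ c) (hL : 2 * c < L)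
    (hC : 0 ≤ C) (hA : 0 ≤ A)
    (W P Q : ι → ℝ × ℝ → ℝ) (P' : ι → ℝ × ℝ → (ℝ × ℝ →L[ℝ] ℝ)) (T T1 T2 σ a a' : ι → ℝ → ℝ)
    (hWc : ∀ k ∈ S, Continuous (W k)) (hQc : ∀ k ∈ S, Continuous (Q k))
    (hW : ∀ k ∈ S, ∀ z t, HasDerivAt (fun z => W k (z, t)) (P k (z, t)) z)
    (hP : ∀ k ∈ S, ∀ p, HasFDerivAt (P k) (P' k p) p)
    (hQ : ∀ k ∈ S, ∀ z t, HasDerivAt (fun z => Q k (z, t)) (P' k (z, t) (0, 1)) z)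
    (hT : ∀ k ∈ S, ∀ z, HasDerivAt (T k) (T1 k z) z)
    (hT1 : ∀ k ∈ S, ∀ z, HasDerivAt (T1 k) (T2 k z) z)
    (hσ : ∀ k ∈ S, ∀ z, HasDerivAt (σ k) (a k z) z)
    (ha : ∀ k ∈ S, ∀ z, HasDerivAt (a k) (a' k z) z)
    (ha1 : ∀ k ∈ S, ∀ z ∈ Icc (0:ℝ) 1, 1 ≤ a k z ∧ a k z ≤ c)
    (ha' : ∀ k ∈ S, ∀ z ∈ Icc (0:ℝ) 1, |a' k z| ≤ A)
    (hW0 : ∀ k ∈ S, ∀ t ∈ Icc (0:ℝ) L, W k (0, t) = 0)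
    (hP0 : ∀ k ∈ S, ∀ t ∈ Icc (0:ℝ) L, P k (0, t) = 0)
    (hQ0 : ∀ k ∈ S, ∀ t ∈ Icc (0:ℝ) L, Q k (0, t) = 0)
    (hT0 : ∀ k ∈ S, T k 0 = 0) (hT10 : ∀ k ∈ S, T1 k 0 = 0)
    (hpde : ∀ k ∈ S, ∀ z ∈ Ioo (0:ℝ) 1, ∀ t ∈ Ioo (0:ℝ) L, ∀ E : ℝ, 0 ≤ E →
      (∀ l ∈ S, |W l (z, t)| ≤ E ∧ |Q l (z, t)| ≤ E ∧ |W l (z, 0)| ≤ E ∧ |P l (z, 0)| ≤ E ∧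
        |T l z| ≤ E ∧ |T1 l z| ≤ E) →
      |P' k (z, t) (1, 0) - 2 * a k z * P' k (z, t) (0, 1)| ≤ C * E)
    (hode : ∀ k ∈ S, ∀ z ∈ Ioo (0:ℝ) 1, ∀ E : ℝ, 0 ≤ E →
      (∀ l ∈ S, |W l (z, 0)| ≤ E ∧ |P l (z, 0)| ≤ E ∧ |T l z| ≤ E ∧ |T1 l z| ≤ E) →
      |T2 k z| ≤ C * E) :
    ∀ k ∈ S, ∀ z ∈ Icc (0:ℝ) 1, ∀ t, 0 ≤ t → t ≤ L - 2 * c * z →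
      W k (z, t) = 0 ∧ T k z = 0 ∧ T1 k z = 0 := by
  -- this size of `lam` makes each integration along a characteristic gain the factor `1 / 2`
  set lam : ℝ := 2 * (A + C + 1) with hlam
  have hlam0 : 0 < lam := by positivity
  have hPc : ∀ k ∈ S, Continuous (P k) := fun k hk =>
    continuous_iff_continuousAt.2 fun p => (hP k hk p).continuousAt
  have hTc : ∀ k ∈ S, Continuous (T k) := fun k hk =>
    continuous_iff_continuousAt.2 fun p => (hT k hk p).continuousAt
  have hT1c : ∀ k ∈ S, Continuous (T1 k) := fun k hk =>
    continuous_iff_continuousAt.2 fun p => (hT1 k hk p).continuousAt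
  have hσc : ∀ k ∈ S, Continuous (σ k) := fun k hk =>
    continuous_iff_continuousAt.2 fun p => (hσ k hk p).continuousAt
  set Bd : ℝ → Prop := fun K => ∀ k ∈ S, ∀ z ∈ Icc (0:ℝ) 1, ∀ t, 0 ≤ t → t ≤ L - 2 * c * z →
      |W k (z, t)| ≤ K * Real.exp (lam * z) ∧ |P k (z, t)| ≤ K * Real.exp (lam * z) ∧
      |Q k (z, t)| ≤ K * Real.exp (lam * z) ∧ |T k z| ≤ K * Real.exp (lam * z) ∧
      |T1 k z| ≤ K * Real.exp (lam * z) with hBd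
  have hL0 : 0 ≤ L := by linarith
  -- some bound exists by compactness
  obtain ⟨K₀, hK₀, hBdK⟩ : ∃ K₀, 0 ≤ K₀ ∧ Bd K₀ := by
    obtain ⟨B1, h1, hB1⟩ := unif_bdd S W hWc L
    obtain ⟨B2, h2, hB2⟩ := unif_bdd S P hPc L
    obtain ⟨B3, h3, hB3⟩ := unif_bdd S Q hQc L
    obtain ⟨B4, h4, hB4⟩ := unif_bdd S (fun k p => T k p.1)
      (fun k hk => (hTc k hk).comp continuous_fst) L
    obtain ⟨B5, h5, hB5⟩ := unif_bdd S (fun k p => T1 k p.1)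
      (fun k hk => (hT1c k hk).comp continuous_fst) L
    refine ⟨B1 + B2 + B3 + B4 + B5, by positivity, fun k hk z hz t ht0 ht => ?_⟩
    have hz0 := hz.1
    have htL : t ∈ Icc (0:ℝ) L := ⟨ht0, by nlinarith⟩
    have hexp : 1 ≤ Real.exp (lam * z) := Real.one_le_exp (by positivity)
    have key : ∀ x B : ℝ, x ≤ B → B ≤ B1 + B2 + B3 + B4 + B5 →
        x ≤ (B1 + B2 + B3 + B4 + B5) * Real.exp (lam * z) := by
      intro x B hx hB
      have : 0 ≤ B1 + B2 + B3 + B4 + B5 := by positivity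
      nlinarith
    exact ⟨key _ _ (hB1 k hk z hz t htL) (by linarith), key _ _ (hB2 k hk z hz t htL) (by linarith),
      key _ _ (hB3 k hk z hz t htL) (by linarith), key _ _ (hB4 k hk z hz t htL) (by linarith),
      key _ _ (hB5 k hk z hz t htL) (by linarith)⟩
  have step : ∀ K, 0 ≤ K → Bd K → Bd (K / 2) := by
    intro K hK hb k hk
    have hinit : ∀ z ∈ Icc (0:ℝ) 1, (0:ℝ) ≤ L - 2 * c * z := by
      intro z hz
      nlinarith [hz.2]
    have hpde' : ∀ z ∈ Ioo (0:ℝ) 1, ∀ t, 0 < t → t ≤ L - 2 * c * z → t < L →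
        |P' k (z, t) (1, 0) - 2 * a k z * P' k (z, t) (0, 1)|
          ≤ C * (K * Real.exp (lam * z)) := by
      intro z hz t ht0 ht htL
      refine hpde k hk z hz t ⟨ht0, htL⟩ _ (by positivity) fun l hl => ?_
      have hz' := Ioo_subset_Icc_self hz
      obtain ⟨e1, e2, e3, e4, e5⟩ := hb l hl z hz' t ht0.le ht
      obtain ⟨d1, d2, d3, d4, d5⟩ := hb l hl z hz' 0 le_rfl (hinit z hz')
      exact ⟨e1, e3, d1, d2, e4, e5⟩
    have fac : ∀ x u : ℝ, x ≤ A + C + 1 → x * K / lam * Real.exp u ≤ K / 2 * Real.exp u := by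
      intro x u hx
      apply mul_le_mul_of_nonneg_right _ (Real.exp_pos _).le
      rw [div_le_div_iff₀ hlam0 two_pos, hlam]
      nlinarith
    -- `T'` and `T` are integrals in `z`, and `W` is the integral of `P` along `t = const`
    have bT1 : ∀ z ∈ Icc (0:ℝ) 1, |T1 k z| ≤ K / 2 * Real.exp (lam * z) := by
      intro z hz
      refine (growth (B := C * K) hz.1 hlam0 (by positivity) (hT1c k hk).continuousOn
        (fun x _ => hT1 k hk x) (fun x hx => ?_) (hT10 k hk)).trans (fac C _ (by linarith))
      rw [mul_assoc]
      have hx' : x ∈ Ioo (0:ℝ) 1 := ⟨hx.1, hx.2.trans_le hz.2⟩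
      refine hode k hk x hx' _ (by positivity) fun l hl => ?_
      have hx'' := Ioo_subset_Icc_self hx'
      obtain ⟨d1, d2, d3, d4, d5⟩ := hb l hl x hx'' 0 le_rfl (hinit x hx'')
      exact ⟨d1, d2, d4, d5⟩
    have bT : ∀ z ∈ Icc (0:ℝ) 1, |T k z| ≤ K / 2 * Real.exp (lam * z) := by
      intro z hz
      refine (growth (B := 1 * K) hz.1 hlam0 (by positivity) (hTc k hk).continuousOn
        (fun x _ => hT k hk x) (fun x hx => ?_) (hT0 k hk)).trans (fac 1 _ (by linarith))
      rw [one_mul]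
      have hx' : x ∈ Icc (0:ℝ) 1 := ⟨hx.1.le, hx.2.le.trans hz.2⟩
      exact (hb k hk x hx' 0 le_rfl (hinit x hx')).2.2.2.2
    have bW : ∀ z ∈ Icc (0:ℝ) 1, ∀ t, 0 ≤ t → t ≤ L - 2 * c * z →
        |W k (z, t)| ≤ K / 2 * Real.exp (lam * z) := by
      intro z hz t ht0 ht
      have hz0 := hz.1
      refine (growth (φ := fun z => W k (z, t)) (B := 1 * K) hz.1 hlam0 (by positivity)
        ((hWc k hk).comp (by fun_prop : Continuous fun z : ℝ => (z, t))).continuousOn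
        (fun x _ => hW k hk x t) (fun x hx => ?_)
        (hW0 k hk t ⟨ht0, by nlinarith⟩)).trans (fac 1 _ (by linarith))
      rw [one_mul]
      have hx' : x ∈ Icc (0:ℝ) 1 := ⟨hx.1.le, hx.2.le.trans hz.2⟩
      exact (hb k hk x hx' t ht0 (by nlinarith [hx.2])).2.1
    -- `P` is transported along `t + 2 σ = const`; the sharper constant is needed to bound `Q`
    have bP : ∀ z ∈ Icc (0:ℝ) 1, ∀ t, 0 ≤ t → t ≤ L - 2 * c * z →
        |P k (z, t)| ≤ C * K / lam * Real.exp (lam * z) := by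
      intro z hz t ht0 ht
      have hz0 := hz.1
      -- `1 ≤ σ' ≤ c` keeps the backward characteristic inside the region
      have hs : ∀ x ∈ Icc (0:ℝ) z, z - x ≤ σ k z - σ k x ∧ σ k z - σ k x ≤ c * (z - x) := by
        intro x hx
        have hder : ∀ y ∈ interior (Icc (0:ℝ) 1), y ∈ Icc (0:ℝ) 1 := fun y hy =>
          interior_subset hy
        have hd : DifferentiableOn ℝ (σ k) (interior (Icc (0:ℝ) 1)) := fun y _ =>
          (hσ k hk y).differentiableAt.differentiableWithinAt
        have hx1 : x ∈ Icc (0:ℝ) 1 := ⟨hx.1, hx.2.trans hz.2⟩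
        constructor
        · have := (convex_Icc (0:ℝ) 1).mul_sub_le_image_sub_of_le_deriv (C := 1)
            (hσc k hk).continuousOn hd (fun y hy => by
              rw [(hσ k hk y).deriv]; exact (ha1 k hk y (hder y hy)).1) x hx1 z hz hx.2
          linarith
        · exact (convex_Icc (0:ℝ) 1).image_sub_le_mul_sub_of_deriv_le (C := c)
            (hσc k hk).continuousOn hd (fun y hy => by
              rw [(hσ k hk y).deriv]; exact (ha1 k hk y (hder y hy)).2) x hx1 z hz hx.2
      have hcurve : ∀ x : ℝ, HasDerivAt (fun x => (x, t + 2 * σ k z - 2 * σ k x))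
          ((1 : ℝ), -(2 * a k x)) x := fun x =>
        (hasDerivAt_id x).prodMk (((hσ k hk x).const_mul 2).const_sub _)
      have hcomp : ∀ x : ℝ, HasDerivAt (fun x => P k (x, t + 2 * σ k z - 2 * σ k x))
          (P' k (x, t + 2 * σ k z - 2 * σ k x) (1, 0)
            - 2 * a k x * P' k (x, t + 2 * σ k z - 2 * σ k x) (0, 1)) x := by
        intro x
        have h := (hP k hk (x, t + 2 * σ k z - 2 * σ k x)).comp_hasDerivAt x (hcurve x)
        have he : ((1 : ℝ), -(2 * a k x)) = (1, 0) - (2 * a k x) • ((0 : ℝ), (1 : ℝ)) := by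
          ext <;> simp
        rw [he, map_sub, map_smul] at h
        exact h
      have h := growth (φ := fun x => P k (x, t + 2 * σ k z - 2 * σ k x)) (B := C * K) hz.1 hlam0
        (by positivity) (fun x _ => (hcomp x).continuousAt.continuousWithinAt)
        (fun x _ => hcomp x) (fun x hx => ?_) ?_
      · simpa using h
      · rw [mul_assoc C]
        obtain ⟨s1, s2⟩ := hs x ⟨hx.1.le, hx.2.le⟩
        have hx1 := hx.1
        have hx2 := hx.2
        have hz1 : z ≤ 1 := hz.2
        have hcp : 1 ≤ c := (ha1 k hk z hz).1.trans (ha1 k hk z hz).2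
        exact hpde' x ⟨hx.1, hx.2.trans_le hz.2⟩ (t + 2 * σ k z - 2 * σ k x) (by linarith) (by nlinarith) (by nlinarith)
      · obtain ⟨s1, s2⟩ := hs 0 ⟨le_rfl, hz.1⟩
        exact hP0 k hk _ ⟨by linarith, by nlinarith⟩
    -- `2 a Q - P` is integrated along `t = const`, where `∂_t P` cancels; the equation is available
    -- for `t > 0` only
    have bQ' : ∀ z ∈ Icc (0:ℝ) 1, ∀ t, 0 < t → t ≤ L - 2 * c * z →
        |Q k (z, t)| ≤ K / 2 * Real.exp (lam * z) := by
      intro z hz t ht0 ht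
      have hz0 := hz.1
      have hcp : 1 ≤ c := (ha1 k hk z hz).1.trans (ha1 k hk z hz).2
      have htL : t ∈ Icc (0:ℝ) L := ⟨ht0.le, by nlinarith⟩
      have hPz : ∀ x, HasDerivAt (fun x => P k (x, t)) (P' k (x, t) (1, 0)) x := fun x =>
        (hP k hk (x, t)).comp_hasDerivAt x ((hasDerivAt_id x).prodMk (hasDerivAt_const x t))
      have hS : ∀ x, HasDerivAt (fun x => 2 * a k x * Q k (x, t) - P k (x, t))
          (2 * a' k x * Q k (x, t)
            - (P' k (x, t) (1, 0) - 2 * a k x * P' k (x, t) (0, 1))) x := by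
        intro x
        have h := ((((ha k hk x).const_mul 2).mul (hQ k hk x t))).sub (hPz x)
        exact h.congr_deriv (by ring)
      have h := growth (φ := fun x => 2 * a k x * Q k (x, t) - P k (x, t))
        (B := (2 * A + C) * K) hz.1 hlam0 (by positivity)
        (fun x _ => (hS x).continuousAt.continuousWithinAt)
        (fun x _ => hS x) (fun x hx => ?_) (by simp [hQ0 k hk t htL, hP0 k hk t htL])
      · have hp := bP z hz t ht0.le ht
        have ha0 := (ha1 k hk z hz).1
        have h2 : 2 * |Q k (z, t)| ≤ |2 * a k z * Q k (z, t)| := by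
          rw [abs_mul, abs_of_pos (by linarith : 0 < 2 * a k z)]
          nlinarith [abs_nonneg (Q k (z, t))]
        have h3 : |2 * a k z * Q k (z, t)| ≤
            |2 * a k z * Q k (z, t) - P k (z, t)| + |P k (z, t)| := by
          have := abs_add_le (2 * a k z * Q k (z, t) - P k (z, t)) (P k (z, t))
          simpa using this
        have h4 := fac (A + C) (lam * z) (by linarith)
        have h5 : (2 * A + C) * K / lam * Real.exp (lam * z) + C * K / lam * Real.exp (lam * z)
            = 2 * ((A + C) * K / lam * Real.exp (lam * z)) := by ring
        linarith
      · have hx1 := hx.1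
        have hx2 := hx.2
        have hxI : x ∈ Ioo (0:ℝ) 1 := ⟨hx.1, hx.2.trans_le hz.2⟩
        have hxL : t ≤ L - 2 * c * x := by nlinarith
        have hq := (hb k hk x (Ioo_subset_Icc_self hxI) t ht0.le hxL).2.2.1
        have hf := hpde' x hxI t ht0 hxL (by nlinarith)
        have hq2 : |2 * a' k x * Q k (x, t)| ≤ 2 * A * (K * Real.exp (lam * x)) := by
          rw [abs_mul, abs_mul, abs_two]
          have := ha' k hk x (Ioo_subset_Icc_self hxI)
          gcongr
        have := abs_sub (2 * a' k x * Q k (x, t))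
          (P' k (x, t) (1, 0) - 2 * a k x * P' k (x, t) (0, 1))
        nlinarith
    -- `t = 0` by continuity of `Q`
    have bQ : ∀ z ∈ Icc (0:ℝ) 1, ∀ t, 0 ≤ t → t ≤ L - 2 * c * z →
        |Q k (z, t)| ≤ K / 2 * Real.exp (lam * z) := by
      intro z hz t ht0 ht
      have hd : 0 < L - 2 * c * z := by nlinarith [hz.2]
      have hcl : IsClosed {t : ℝ | |Q k (z, t)| ≤ K / 2 * Real.exp (lam * z)} :=
        isClosed_le (((hQc k hk).comp (by fun_prop : Continuous fun t : ℝ => (z, t))).abs)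
          continuous_const
      have hsub : Ioo 0 (L - 2 * c * z) ⊆ {t : ℝ | |Q k (z, t)| ≤ K / 2 * Real.exp (lam * z)} :=
        fun s hs => bQ' z hz s hs.1 hs.2.le
      have := closure_minimal hsub hcl
      rw [closure_Ioo hd.ne] at this
      exact this ⟨ht0, ht⟩
    intro z hz t ht0 ht
    exact ⟨bW z hz t ht0 ht, (bP z hz t ht0 ht).trans (fac C _ (by linarith)), bQ z hz t ht0 ht,
      bT z hz, bT1 z hz⟩
  have hall : ∀ n : ℕ, Bd (K₀ / 2 ^ n) := by
    intro n
    induction n with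
    | zero => simpa using hBdK
    | succ n ih =>
      have := step _ (by positivity) ih
      rwa [div_div, ← pow_succ] at this
  intro k hk z hz t ht0 ht
  have hlim : Filter.Tendsto (fun n : ℕ => K₀ / 2 ^ n * Real.exp (lam * z)) Filter.atTop
      (nhds 0) := by
    have h := (tendsto_pow_atTop_nhds_zero_of_lt_one (r := (1 / 2 : ℝ)) (by norm_num)
      (by norm_num)).const_mul (K₀ * Real.exp (lam * z))
    rw [mul_zero] at h
    refine h.congr fun n => ?_
    rw [one_div, inv_pow]
    ring
  have hz' : ∀ x : ℝ, (∀ n : ℕ, |x| ≤ K₀ / 2 ^ n * Real.exp (lam * z)) → x = 0 := fun x hx =>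
    abs_nonpos_iff.1 (ge_of_tendsto' hlim hx)
  exact ⟨hz' _ fun n => (hall n k hk z hz t ht0 ht).1,
    hz' _ fun n => (hall n k hk z hz t ht0 ht).2.2.2.1,
    hz' _ fun n => (hall n k hk z hz t ht0 ht).2.2.2.2⟩

/-! ### Derivatives of a `C²` function of two variables -/

/-- The Fréchet derivative of `∂_z f`, as a function of `p = (z, t)`. -/
noncomputable def gradDz (f : ℝ → ℝ → ℝ) (p : ℝ × ℝ) : ℝ × ℝ →L[ℝ] ℝ :=
  fderiv ℝ (fun p : ℝ × ℝ => deriv (fun z => f z p.2) p.1) p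

/-- The derivatives of a `C²` function in the form required by `propagation`. The last item is the
symmetry of second derivatives, `∂_z ∂_t f = ∂_t ∂_z f`. -/
lemma regularity (f : ℝ → ℝ → ℝ) (hf : ContDiff ℝ 2 (fun p : ℝ × ℝ => f p.1 p.2)) :
    (∀ z t, HasDerivAt (fun z => f z t) (deriv (fun z => f z t) z) z) ∧
    (∀ z t, HasDerivAt (fun t => f z t) (deriv (fun t => f z t) t) t) ∧
    Continuous (fun p : ℝ × ℝ => deriv (fun t => f p.1 t) p.2) ∧
    (∀ p, HasFDerivAt (fun p : ℝ × ℝ => deriv (fun z => f z p.2) p.1) (gradDz f p) p) ∧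
    (∀ z t, gradDz f (z, t) (1, 0) = iteratedDeriv 2 (fun z => f z t) z) ∧
    (∀ z t, gradDz f (z, t) (0, 1) = deriv (fun t' => deriv (fun z => f z t') z) t) ∧
    (∀ z t, HasDerivAt (fun z => deriv (fun t => f z t) t) (gradDz f (z, t) (0, 1)) z) := by
  set g : ℝ × ℝ → ℝ := fun p => f p.1 p.2 with hg
  have hgd : ∀ p, HasFDerivAt g (fderiv ℝ g p) p := fun p =>
    ((hf.differentiable (by norm_num)) p).hasFDerivAt
  have lz : ∀ z t : ℝ, HasDerivAt (fun z : ℝ => (z, t)) ((1 : ℝ), (0 : ℝ)) z := fun z t =>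
    (hasDerivAt_id z).prodMk (hasDerivAt_const z t)
  have lt : ∀ z t : ℝ, HasDerivAt (fun t : ℝ => (z, t)) ((0 : ℝ), (1 : ℝ)) t := fun z t =>
    (hasDerivAt_const t z).prodMk (hasDerivAt_id t)
  have dz : ∀ z t, HasDerivAt (fun z => f z t) (fderiv ℝ g (z, t) (1, 0)) z := fun z t =>
    HasFDerivAt.comp_hasDerivAt (f := fun z : ℝ => (z, t)) z (hgd (z, t)) (lz z t)
  have dt : ∀ z t, HasDerivAt (fun t => f z t) (fderiv ℝ g (z, t) (0, 1)) t := fun z t =>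
    HasFDerivAt.comp_hasDerivAt (f := fun t : ℝ => (z, t)) t (hgd (z, t)) (lt z t)
  have ePf : (fun p : ℝ × ℝ => deriv (fun z => f z p.2) p.1) = fun p => fderiv ℝ g p (1, 0) :=
    funext fun p => (dz p.1 p.2).deriv
  have eQf : (fun p : ℝ × ℝ => deriv (fun t => f p.1 t) p.2) = fun p => fderiv ℝ g p (0, 1) :=
    funext fun p => (dt p.1 p.2).deriv
  have hg1 : ContDiff ℝ 1 (fderiv ℝ g) := hf.fderiv_right (by norm_num)
  have hgdd : ∀ p, HasFDerivAt (fderiv ℝ g) (fderiv ℝ (fderiv ℝ g) p) p := fun p =>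
    ((hg1.differentiable (by norm_num)) p).hasFDerivAt
  have hsym : ∀ p u v, fderiv ℝ (fderiv ℝ g) p u v = fderiv ℝ (fderiv ℝ g) p v u := fun p u v =>
    second_derivative_symmetric hgd (hgdd p) u v
  have happ : ∀ p v, HasFDerivAt (fun p => fderiv ℝ g p v)
      ((fderiv ℝ (fderiv ℝ g) p).flip v) p := by
    intro p v
    simpa using (hgdd p).clm_apply (hasFDerivAt_const v p)
  have hD : ∀ p, gradDz f p = (fderiv ℝ (fderiv ℝ g) p).flip (1, 0) := fun p => by
    rw [gradDz, ePf]
    exact (happ p (1, 0)).fderiv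
  simp only [hD]
  refine ⟨fun z t => by rw [(dz z t).deriv]; exact dz z t,
    fun z t => by rw [(dt z t).deriv]; exact dt z t, ?_, ?_, ?_, ?_, ?_⟩
  · rw [eQf]
    exact hg1.continuous.clm_apply continuous_const
  · rw [ePf]
    exact fun p => happ p (1, 0)
  · intro z t
    rw [iteratedDeriv_succ, iteratedDeriv_one]
    have e : deriv (fun z => f z t) = fun z => fderiv ℝ g (z, t) (1, 0) :=
      funext fun z => (dz z t).deriv
    rw [e]
    exact (((happ (z, t) (1, 0)).comp_hasDerivAt z (lz z t)).deriv).symm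
  · intro z t
    have e : (fun t' => deriv (fun z => f z t') z) = fun t' => fderiv ℝ g (z, t') (1, 0) :=
      funext fun t' => (dz z t').deriv
    rw [e]
    exact (((happ (z, t) (1, 0)).comp_hasDerivAt t (lt z t)).deriv).symm
  · intro z t
    have e : (fun z => deriv (fun t => f z t) t) = fun z => fderiv ℝ g (z, t) (0, 1) :=
      funext fun z => (dt z t).deriv
    rw [e]
    have h := (happ (z, t) (0, 1)).comp_hasDerivAt z (lz z t)
    have e2 : (fderiv ℝ (fderiv ℝ g) (z, t)).flip (1, 0) (0, 1)
        = (fderiv ℝ (fderiv ℝ g) (z, t)).flip (0, 1) (1, 0) := hsym (z, t) (0, 1) (1, 0)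
    rw [e2]
    exact h

/-! ### Lipschitz dependence of the lower order terms -/

/-- `a` and `b` are bounded by `c`, and differ by at most `c * E`. -/
def Close (E c a b : ℝ) : Prop := |a| ≤ c ∧ |b| ≤ c ∧ |a - b| ≤ c * E

namespace Close

variable {E c c' a a' b b' : ℝ}

lemma add (h : Close E c a b) (h' : Close E c' a' b') :
    Close E (c + c') (a + a') (b + b') := by
  refine ⟨(abs_add_le _ _).trans (add_le_add h.1 h'.1),
    (abs_add_le _ _).trans (add_le_add h.2.1 h'.2.1), ?_⟩
  rw [add_sub_add_comm, add_mul]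
  exact (abs_add_le _ _).trans (add_le_add h.2.2 h'.2.2)

lemma neg (h : Close E c a b) : Close E c (-a) (-b) := by
  refine ⟨by simpa using h.1, by simpa using h.2.1, ?_⟩
  rw [← abs_neg]
  have := h.2.2
  convert this using 2
  ring

lemma sub (h : Close E c a b) (h' : Close E c' a' b') :
    Close E (c + c') (a - a') (b - b') := by
  rw [sub_eq_add_neg, sub_eq_add_neg]
  exact h.add h'.neg

lemma mul (h : Close E c a b) (h' : Close E c' a' b') :
    Close E (2 * (c * c')) (a * a') (b * b') := by
  have hc : 0 ≤ c := (abs_nonneg _).trans h.1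
  have hc' : 0 ≤ c' := (abs_nonneg _).trans h'.1
  have h1 : |a * a'| ≤ c * c' := by
    rw [abs_mul]; exact mul_le_mul h.1 h'.1 (abs_nonneg _) hc
  have h2 : |b * b'| ≤ c * c' := by
    rw [abs_mul]; exact mul_le_mul h.2.1 h'.2.1 (abs_nonneg _) hc
  have hcc := mul_nonneg hc hc'
  refine ⟨by linarith, by linarith, ?_⟩
  have e : a * a' - b * b' = a * (a' - b') + (a - b) * b' := by ring
  have h3 : |a * (a' - b')| ≤ c * (c' * E) := by
    rw [abs_mul]; exact mul_le_mul h.1 h'.2.2 (abs_nonneg _) hc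
  have h4 : |(a - b) * b'| ≤ c * E * c' := by
    rw [abs_mul]
    exact mul_le_mul h.2.2 h'.2.1 (abs_nonneg _) ((abs_nonneg _).trans h.2.2)
  rw [e]
  calc _ ≤ _ := abs_add_le _ _
    _ ≤ c * (c' * E) + c * E * c' := add_le_add h3 h4
    _ = _ := by ring

lemma const_mul (k : ℝ) (h : Close E c a b) : Close E (|k| * c) (k * a) (k * b) := by
  refine ⟨?_, ?_, ?_⟩
  · rw [abs_mul]; exact mul_le_mul_of_nonneg_left h.1 (abs_nonneg _)
  · rw [abs_mul]; exact mul_le_mul_of_nonneg_left h.2.1 (abs_nonneg _)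
  · rw [← mul_sub, abs_mul, mul_assoc]; exact mul_le_mul_of_nonneg_left h.2.2 (abs_nonneg _)

lemma div_const (k : ℝ) (h : Close E c a b) : Close E (|k⁻¹| * c) (a / k) (b / k) := by
  rw [div_eq_inv_mul, div_eq_inv_mul]
  exact h.const_mul k⁻¹

lemma mono (h : Close E c a b) (hE : 0 ≤ E) (hc : c ≤ c') : Close E c' a b :=
  ⟨h.1.trans hc, h.2.1.trans hc, h.2.2.trans (mul_le_mul_of_nonneg_right hc hE)⟩

lemma log {A : ℝ} (hA : 0 < A) (ha : A ≤ a) (hb : A ≤ b) (hE : 0 ≤ E) (h : Close E c a b) :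
    Close E (c + 1 + 1 / A + c / A) (Real.log a) (Real.log b) := by
  have hc : 0 ≤ c := (abs_nonneg _).trans h.1
  have hcA : 0 ≤ c / A := by positivity
  have hA' : 0 ≤ 1 / A := by positivity
  have key : ∀ x, A ≤ x → |x| ≤ c → |Real.log x| ≤ c + 1 + 1 / A + c / A := by
    intro x hx hxc
    have hx0 : 0 < x := hA.trans_le hx
    have h1 := Real.log_le_sub_one_of_pos hx0
    have h2 := Real.one_sub_inv_le_log_of_pos hx0
    have h3 : x⁻¹ ≤ 1 / A := by rw [one_div]; exact inv_anti₀ hA hx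
    rw [abs_le]
    constructor <;> linarith [le_abs_self x]
  have key2 : ∀ x y, A ≤ x → A ≤ y → |x - y| ≤ c * E →
      Real.log x - Real.log y ≤ c / A * E := by
    intro x y hx hy hxy
    have hx0 : 0 < x := hA.trans_le hx
    have hy0 : 0 < y := hA.trans_le hy
    rw [← Real.log_div hx0.ne' hy0.ne']
    have h1 := Real.log_le_sub_one_of_pos (div_pos hx0 hy0)
    have h2 : x / y - 1 = (x - y) / y := by field_simp
    have h3 : (x - y) / y ≤ c * E / A :=
      div_le_div₀ (by positivity) ((le_abs_self _).trans hxy) hA hy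
    calc _ ≤ _ := h1
      _ ≤ c * E / A := h2 ▸ h3
      _ = _ := by ring
  refine ⟨key a ha h.1, key b hb h.2.1, ?_⟩
  have e1 := key2 a b ha hb h.2.2
  have e2 := key2 b a hb ha (by rw [abs_sub_comm]; exact h.2.2)
  have e3 : c / A * E ≤ (c + 1 + 1 / A + c / A) * E :=
    mul_le_mul_of_nonneg_right (by linarith) hE
  rw [abs_le]
  constructor <;> linarith

lemma inv {A : ℝ} (hA : 0 < A) (ha : A ≤ a) (hb : A ≤ b) (hE : 0 ≤ E) (h : Close E c a b) :
    Close E (1 / A + c / A ^ 2) a⁻¹ b⁻¹ := by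
  have hc : 0 ≤ c := (abs_nonneg _).trans h.1
  have hcA : 0 ≤ c / A ^ 2 := by positivity
  have hA' : 0 ≤ 1 / A := by positivity
  have ha0 : 0 < a := hA.trans_le ha
  have hb0 : 0 < b := hA.trans_le hb
  have key : ∀ x, A ≤ x → |x⁻¹| ≤ 1 / A + c / A ^ 2 := by
    intro x hx
    have hx0 : 0 < x := hA.trans_le hx
    rw [abs_of_pos (inv_pos.2 hx0)]
    have : x⁻¹ ≤ 1 / A := by rw [one_div]; exact inv_anti₀ hA hx
    linarith
  refine ⟨key a ha, key b hb, ?_⟩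
  have e : a⁻¹ - b⁻¹ = (b - a) / (a * b) := by field_simp
  rw [e, abs_div, abs_of_pos (mul_pos ha0 hb0), abs_sub_comm]
  calc |a - b| / (a * b) ≤ c * E / A ^ 2 :=
        div_le_div₀ (by positivity) h.2.2 (by positivity) (by nlinarith)
    _ = c / A ^ 2 * E := by ring
    _ ≤ _ := mul_le_mul_of_nonneg_right (by linarith) hE

end Close

lemma Close.of_le {E R a b : ℝ} (ha : |a| ≤ R) (hb : |b| ≤ R) (hab : |a - b| ≤ E) (hR : 1 ≤ R)
    (hE : 0 ≤ E) : Close E R a b :=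
  ⟨ha, hb, hab.trans (by nlinarith)⟩

/-- Lipschitz dependence of `∇ʰ[ln w(·,0)] · ∇ʰτ` on `w(·,0)`, `∂_z w(·,0)`, `τ` and `∂_zτ`, with a
constant independent of the node and of `z`. -/
lemma dot_close (R A h : ℝ) (hA : 0 < A) (N : ℕ) :
    ∃ C, ∀ E, 0 ≤ E → ∀ (w₁ w₂ : ℕ → ℕ → ℝ → ℝ → ℝ) (τ₁ τ₂ : ℕ → ℕ → ℝ → ℝ) (i j : ℕ) (z : ℝ),
      1 ≤ i → i ≤ N → 1 ≤ j → j ≤ N →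
      DifferentiableAt ℝ (fun z => w₁ i j z 0) z → DifferentiableAt ℝ (fun z => w₂ i j z 0) z →
      (∀ i ≤ N + 1, ∀ j ≤ N + 1, A ≤ w₁ i j z 0 ∧ A ≤ w₂ i j z 0) →
      (∀ i ≤ N + 1, ∀ j ≤ N + 1, Close E R (w₁ i j z 0) (w₂ i j z 0)) →
      (∀ i ≤ N + 1, ∀ j ≤ N + 1, Close E R (τ₁ i j z) (τ₂ i j z)) →
      Close E R (dzv w₁ i j z 0) (dzv w₂ i j z 0) →
      Close E R (deriv (τ₁ i j) z) (deriv (τ₂ i j) z) →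
      Close E C
        (dotH (gradH h (fun i' j' z' => Real.log (w₁ i' j' z' 0)) i j z) (gradH h τ₁ i j z))
        (dotH (gradH h (fun i' j' z' => Real.log (w₂ i' j' z' 0)) i j z) (gradH h τ₂ i j z)) := by
  -- the constant is left open, and found by unification with the composed bounds
  apply Exists.intro
  intro E hE w₁ w₂ τ₁ τ₂ i j z hi1 hiN hj1 hjN d1 d2 hlow hw hτ hp hτ'
  have hlog : ∀ i ≤ N + 1, ∀ j ≤ N + 1, Close E (R + 1 + 1 / A + R / A)
      (Real.log (w₁ i j z 0)) (Real.log (w₂ i j z 0)) := fun i hi j hj =>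
    (hw i hi j hj).log hA (hlow i hi j hj).1 (hlow i hi j hj).2 hE
  have l0 := hlow i (by omega) j (by omega)
  have hinv := (hw i (by omega) j (by omega)).inv hA l0.1 l0.2 hE
  have e1 : deriv (fun z' => Real.log (w₁ i j z' 0)) z = dzv w₁ i j z 0 * (w₁ i j z 0)⁻¹ := by
    rw [deriv.log d1 (by linarith), div_eq_mul_inv]
    rfl
  have e2 : deriv (fun z' => Real.log (w₂ i j z' 0)) z = dzv w₂ i j z 0 * (w₂ i j z 0)⁻¹ := by
    rw [deriv.log d2 (by linarith), div_eq_mul_inv]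
    rfl
  simp only [dotH, gradH, Fin.sum_univ_three, Matrix.cons_val_zero, Matrix.cons_val_one,
    Matrix.cons_val]
  rw [e1, e2]
  exact ((((hlog (i - 1) (by omega) j (by omega)).sub
      (hlog (i + 1) (by omega) j (by omega))).div_const (2 * h)).mul
    (((hτ (i - 1) (by omega) j (by omega)).sub
      (hτ (i + 1) (by omega) j (by omega))).div_const (2 * h))).add
    ((((hlog i (by omega) (j - 1) (by omega)).sub
      (hlog i (by omega) (j + 1) (by omega))).div_const (2 * h)).mul
    (((hτ i (by omega) (j - 1) (by omega)).sub
      (hτ i (by omega) (j + 1) (by omega))).div_const (2 * h))) |>.add ((hp.mul hinv).mul hτ')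

/-- The value the second equation assigns to `∂_z²τ`. -/
noncomputable def rhsT (h : ℝ) (w : ℕ → ℕ → ℝ → ℝ → ℝ) (τ : ℕ → ℕ → ℝ → ℝ) (i j : ℕ) (z : ℝ) : ℝ :=
  -((τ (i + 1) j z - 2 * τ i j z + τ (i - 1) j z) / h ^ 2
    + (τ i (j + 1) z - 2 * τ i j z + τ i (j - 1) z) / h ^ 2)
  - 2 * dotH (gradH h (fun i' j' z' => Real.log (w i' j' z' 0)) i j z) (gradH h τ i j z)

/-- The value the first equation assigns to `∂_z²w - 2 (∂_zτ) ∂_z∂_t w`. -/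
noncomputable def rhsW (h : ℝ) (w : ℕ → ℕ → ℝ → ℝ → ℝ) (τ : ℕ → ℕ → ℝ → ℝ) (i j : ℕ) (z t : ℝ) : ℝ :=
  2 * (((dtv w (i - 1) j z t - dtv w (i + 1) j z t) / (2 * h))
      * ((τ (i - 1) j z - τ (i + 1) j z) / (2 * h)))
    + 2 * (((dtv w i (j - 1) z t - dtv w i (j + 1) z t) / (2 * h))
      * ((τ i (j - 1) z - τ i (j + 1) z) / (2 * h)))
    - 2 * (dtv w i j z t *
      dotH (gradH h (fun i' j' z' => Real.log (w i' j' z' 0)) i j z) (gradH h τ i j z))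
    - (ddx h w i j z t + ddy h w i j z t)

lemma rhsT_close (R h C₀ : ℝ) (N : ℕ) :
    ∃ C, ∀ E, ∀ (w₁ w₂ : ℕ → ℕ → ℝ → ℝ → ℝ) (τ₁ τ₂ : ℕ → ℕ → ℝ → ℝ) (i j : ℕ) (z : ℝ),
      1 ≤ i → i ≤ N → 1 ≤ j → j ≤ N →
      (∀ i ≤ N + 1, ∀ j ≤ N + 1, Close E R (τ₁ i j z) (τ₂ i j z)) →
      Close E C₀
        (dotH (gradH h (fun i' j' z' => Real.log (w₁ i' j' z' 0)) i j z) (gradH h τ₁ i j z))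
        (dotH (gradH h (fun i' j' z' => Real.log (w₂ i' j' z' 0)) i j z) (gradH h τ₂ i j z)) →
      Close E C (rhsT h w₁ τ₁ i j z) (rhsT h w₂ τ₂ i j z) := by
  apply Exists.intro
  intro E w₁ w₂ τ₁ τ₂ i j z hi1 hiN hj1 hjN hτ hdot
  have h0 := (hτ i (by omega) j (by omega)).const_mul 2
  exact (((((hτ (i + 1) (by omega) j (by omega)).sub h0).add
      (hτ (i - 1) (by omega) j (by omega))).div_const (h ^ 2)).add
    ((((hτ i (by omega) (j + 1) (by omega)).sub h0).add
      (hτ i (by omega) (j - 1) (by omega))).div_const (h ^ 2))).neg.sub (hdot.const_mul 2)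

lemma rhsW_close (R h C₀ : ℝ) (N : ℕ) :
    ∃ C, ∀ E, ∀ (w₁ w₂ : ℕ → ℕ → ℝ → ℝ → ℝ) (τ₁ τ₂ : ℕ → ℕ → ℝ → ℝ) (i j : ℕ) (z t : ℝ),
      1 ≤ i → i ≤ N → 1 ≤ j → j ≤ N →
      (∀ i ≤ N + 1, ∀ j ≤ N + 1, Close E R (τ₁ i j z) (τ₂ i j z)) →
      (∀ i ≤ N + 1, ∀ j ≤ N + 1, Close E R (w₁ i j z t) (w₂ i j z t)) →
      (∀ i ≤ N + 1, ∀ j ≤ N + 1, Close E R (dtv w₁ i j z t) (dtv w₂ i j z t)) →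
      Close E C₀
        (dotH (gradH h (fun i' j' z' => Real.log (w₁ i' j' z' 0)) i j z) (gradH h τ₁ i j z))
        (dotH (gradH h (fun i' j' z' => Real.log (w₂ i' j' z' 0)) i j z) (gradH h τ₂ i j z)) →
      Close E C (rhsW h w₁ τ₁ i j z t) (rhsW h w₂ τ₂ i j z t) := by
  apply Exists.intro
  intro E w₁ w₂ τ₁ τ₂ i j z t hi1 hiN hj1 hjN hτ hw hq hdot
  have h0 := (hw i (by omega) j (by omega)).const_mul 2
  have hx := ((((hq (i - 1) (by omega) j (by omega)).sub
      (hq (i + 1) (by omega) j (by omega))).div_const (2 * h)).mul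
    (((hτ (i - 1) (by omega) j (by omega)).sub
      (hτ (i + 1) (by omega) j (by omega))).div_const (2 * h))).const_mul 2
  have hy := ((((hq i (by omega) (j - 1) (by omega)).sub
      (hq i (by omega) (j + 1) (by omega))).div_const (2 * h)).mul
    (((hτ i (by omega) (j - 1) (by omega)).sub
      (hτ i (by omega) (j + 1) (by omega))).div_const (2 * h))).const_mul 2
  have hlap := ((((hw (i + 1) (by omega) j (by omega)).sub h0).add
      (hw (i - 1) (by omega) j (by omega))).div_const (h ^ 2)).add
    ((((hw i (by omega) (j + 1) (by omega)).sub h0).add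
      (hw i (by omega) (j - 1) (by omega))).div_const (h ^ 2))
  have hqd := ((hq i (by omega) j (by omega)).mul hdot).const_mul 2
  exact ((hx.add hy).sub hqd).sub hlap

/-! ### Uniqueness -/

theorem stmt17 (X h₀ M n₀ n₀₀ α : ℝ)
    (hX : 0 < X) (hh₀0 : 0 < h₀) (hh₀1 : h₀ < 1) (hM : 0 < M)
    (hn₀ : 1 < n₀) (hn₀n₀₀ : n₀ < n₀₀)
    (hα : 0 < α) (hα' : α ≤ 2 / (3 * n₀)) :
    ∀ N : ℕ, 1 ≤ N → ∀ h : ℝ, h = 2 * X / (N + 1) → h₀ ≤ h →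
    ∀ w₁ w₂ : ℕ → ℕ → ℝ → ℝ → ℝ, ∀ τ₁ τ₂ : ℕ → ℕ → ℝ → ℝ,
    ∀ g₀ g₁ : ℕ → ℕ → ℝ → ℝ, ∀ g₂ : ℕ → ℕ → ℝ → ℝ → ℝ,
      InS N h (3 / α) M n₀ ((1 / 2) * Real.exp (-(3 * n₀₀ ^ 2 * n₀ ^ 2) / 2)) w₁ τ₁ →
      InS N h (3 / α) M n₀ ((1 / 2) * Real.exp (-(3 * n₀₀ ^ 2 * n₀ ^ 2) / 2)) w₂ τ₂ →
      SolvesBVP N h (3 / α) w₁ τ₁ g₀ g₁ g₂ →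
      SolvesBVP N h (3 / α) w₂ τ₂ g₀ g₁ g₂ →
      (∀ i, 1 ≤ i → i ≤ N → ∀ j, 1 ≤ j → j ≤ N → ∀ z ∈ Icc (0:ℝ) 1,
          ∀ t ∈ Icc (0:ℝ) (1 / α), w₁ i j z t = w₂ i j z t) ∧
      (∀ i, 1 ≤ i → i ≤ N → ∀ j, 1 ≤ j → j ≤ N → ∀ z ∈ Icc (0:ℝ) 1,
          τ₁ i j z = τ₂ i j z) ∧
      (∀ i, 1 ≤ i → i ≤ N → ∀ j, 1 ≤ j → j ≤ N → ∀ z ∈ Icc (0:ℝ) 1,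
          gradHnorm h τ₁ i j z = gradHnorm h τ₂ i j z) := by
  intro N hN h hh hh0 w₁ w₂ τ₁ τ₂ g₀ g₁ g₂ S1 S2 B1 B2
  obtain ⟨cw1, ct1, -, hd1, hb1, hτ1, hA1⟩ := S1
  obtain ⟨cw2, ct2, -, hd2, hb2, hτ2, hA2⟩ := S2
  obtain ⟨pde1, ode1, ic1, bc1, tic1, tbc1⟩ := B1
  obtain ⟨pde2, ode2, ic2, bc2, tic2, tbc2⟩ := B2
  set A : ℝ := (1 / 2) * Real.exp (-(3 * n₀₀ ^ 2 * n₀ ^ 2) / 2) with hAdef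
  have hA : 0 < A := by positivity
  set L : ℝ := 3 / α with hLdef
  have hn₀0 : 0 < n₀ := by linarith
  have hαn : n₀ * α ≤ 2 / 3 := by
    rw [le_div_iff₀ (by positivity)] at hα'
    linarith
  have hL1 : 2 * n₀ ≤ L - 1 / α := by
    have e : L - 1 / α = 2 / α := by rw [hLdef]; ring
    rw [e, le_div_iff₀ hα]
    linarith
  have hα1 : 0 < 1 / α := by positivity
  have hL0 : 0 < L := by positivity
  have r1 := fun i (hi : i ≤ N + 1) j (hj : j ≤ N + 1) => regularity (w₁ i j) (cw1 i hi j hj)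
  have r2 := fun i (hi : i ≤ N + 1) j (hj : j ≤ N + 1) => regularity (w₂ i j) (cw2 i hi j hj)
  -- `∂_t w` is bounded on the compact set, uniformly over all nodes
  obtain ⟨Bq1, hBq1, hq1⟩ := unif_bdd (Finset.range (N + 2) ×ˢ Finset.range (N + 2))
    (fun k p => dtv w₁ k.1 k.2 p.1 p.2) (fun k hk => by
      simp only [Finset.mem_product, Finset.mem_range] at hk
      exact (r1 k.1 (by omega) k.2 (by omega)).2.2.1) L
  obtain ⟨Bq2, hBq2, hq2⟩ := unif_bdd (Finset.range (N + 2) ×ˢ Finset.range (N + 2))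
    (fun k p => dtv w₂ k.1 k.2 p.1 p.2) (fun k hk => by
      simp only [Finset.mem_product, Finset.mem_range] at hk
      exact (r2 k.1 (by omega) k.2 (by omega)).2.2.1) L
  set R : ℝ := M + Bq1 + Bq2 + 1 with hR
  have hR1 : 1 ≤ R := by linarith
  have hMR : M ≤ R := by linarith
  obtain ⟨Cd, hCd⟩ := dot_close R A h hA N
  obtain ⟨CT, hCT⟩ := rhsT_close R h Cd N
  obtain ⟨CW, hCW⟩ := rhsW_close R h Cd N
  have hcases : ∀ i ≤ N + 1, ∀ j ≤ N + 1,
      ((1 ≤ i ∧ i ≤ N) ∧ (1 ≤ j ∧ j ≤ N)) ∨ (i = 0 ∨ i = N + 1 ∨ j = 0 ∨ j = N + 1) := by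
    intro i hi j hj
    omega
  set S : Finset (ℕ × ℕ) := Finset.Icc 1 N ×ˢ Finset.Icc 1 N with hS
  have hmem : ∀ k, k ∈ S ↔ (1 ≤ k.1 ∧ k.1 ≤ N) ∧ (1 ≤ k.2 ∧ k.2 ≤ N) := by
    intro k
    simp [hS]
  have h0L : (0:ℝ) ∈ Icc (0:ℝ) L := ⟨le_rfl, hL0.le⟩
  -- differences vanish at boundary nodes, so bounds at interior nodes extend to all nodes
  have closeτ : ∀ z ∈ Ioo (0:ℝ) 1, ∀ E, 0 ≤ E → (∀ l ∈ S, |τ₁ l.1 l.2 z - τ₂ l.1 l.2 z| ≤ E) →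
      ∀ i ≤ N + 1, ∀ j ≤ N + 1, Close E R (τ₁ i j z) (τ₂ i j z) := by
    intro z hz E hE hl i hi j hj
    have hz' := Ioo_subset_Icc_self hz
    refine Close.of_le ((hτ1 i hi j hj z hz').1.trans hMR) ((hτ2 i hi j hj z hz').1.trans hMR)
      ?_ hR1 hE
    rcases hcases i hi j hj with hint | hbd
    · exact hl (i, j) ((hmem _).2 hint)
    · rw [tbc1 i hi j hj hbd z hz', tbc2 i hi j hj hbd z hz', sub_self, abs_zero]
      exact hE
  have closew : ∀ z ∈ Ioo (0:ℝ) 1, ∀ t ∈ Icc (0:ℝ) L, ∀ E, 0 ≤ E →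
      (∀ l ∈ S, |w₁ l.1 l.2 z t - w₂ l.1 l.2 z t| ≤ E) →
      ∀ i ≤ N + 1, ∀ j ≤ N + 1, Close E R (w₁ i j z t) (w₂ i j z t) := by
    intro z hz t ht E hE hl i hi j hj
    have hz' := Ioo_subset_Icc_self hz
    refine Close.of_le ((hb1 i hi j hj z hz' t ht).1.trans hMR)
      ((hb2 i hi j hj z hz' t ht).1.trans hMR) ?_ hR1 hE
    rcases hcases i hi j hj with hint | hbd
    · exact hl (i, j) ((hmem _).2 hint)
    · rw [bc1 i hi j hj hbd z hz' t ht, bc2 i hi j hj hbd z hz' t ht, sub_self, abs_zero]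
      exact hE
  have closeq : ∀ z ∈ Ioo (0:ℝ) 1, ∀ t ∈ Ioo (0:ℝ) L, ∀ E, 0 ≤ E →
      (∀ l ∈ S, |dtv w₁ l.1 l.2 z t - dtv w₂ l.1 l.2 z t| ≤ E) →
      ∀ i ≤ N + 1, ∀ j ≤ N + 1, Close E R (dtv w₁ i j z t) (dtv w₂ i j z t) := by
    intro z hz t ht E hE hl i hi j hj
    have hz' := Ioo_subset_Icc_self hz
    have hk : (i, j) ∈ Finset.range (N + 2) ×ˢ Finset.range (N + 2) := by
      simp only [Finset.mem_product, Finset.mem_range]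
      omega
    refine Close.of_le ((hq1 (i, j) hk z hz' t (Ioo_subset_Icc_self ht)).trans (by linarith))
      ((hq2 (i, j) hk z hz' t (Ioo_subset_Icc_self ht)).trans (by linarith)) ?_ hR1 hE
    rcases hcases i hi j hj with hint | hbd
    · exact hl (i, j) ((hmem _).2 hint)
    · have : dtv w₁ i j z t = dtv w₂ i j z t := by
        apply Filter.EventuallyEq.deriv_eq
        filter_upwards [isOpen_Ioo.mem_nhds ht] with s hs
        rw [bc1 i hi j hj hbd z hz' s (Ioo_subset_Icc_self hs),
          bc2 i hi j hj hbd z hz' s (Ioo_subset_Icc_self hs)]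
      rw [this, sub_self, abs_zero]
      exact hE
  have closedot : ∀ k ∈ S, ∀ z ∈ Ioo (0:ℝ) 1, ∀ E, 0 ≤ E →
      (∀ l ∈ S, |w₁ l.1 l.2 z 0 - w₂ l.1 l.2 z 0| ≤ E ∧
        |dzv w₁ l.1 l.2 z 0 - dzv w₂ l.1 l.2 z 0| ≤ E ∧ |τ₁ l.1 l.2 z - τ₂ l.1 l.2 z| ≤ E ∧
        |deriv (τ₁ l.1 l.2) z - deriv (τ₂ l.1 l.2) z| ≤ E) →
      Close E Cd
        (dotH (gradH h (fun i' j' z' => Real.log (w₁ i' j' z' 0)) k.1 k.2 z)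
          (gradH h τ₁ k.1 k.2 z))
        (dotH (gradH h (fun i' j' z' => Real.log (w₂ i' j' z' 0)) k.1 k.2 z)
          (gradH h τ₂ k.1 k.2 z)) := by
    intro k hk z hz E hE hl
    have hz' := Ioo_subset_Icc_self hz
    obtain ⟨⟨hi1, hiN⟩, hj1, hjN⟩ := (hmem k).1 hk
    have hi : k.1 ≤ N + 1 := by omega
    have hj : k.2 ≤ N + 1 := by omega
    refine hCd E hE w₁ w₂ τ₁ τ₂ k.1 k.2 z hi1 hiN hj1 hjN
      ((r1 _ hi _ hj).1 z 0).differentiableAt ((r2 _ hi _ hj).1 z 0).differentiableAt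
      (fun i hi j hj => ⟨hA1 i hi j hj z hz', hA2 i hi j hj z hz'⟩)
      (closew z hz 0 h0L E hE fun l hl' => (hl l hl').1)
      (closeτ z hz E hE fun l hl' => (hl l hl').2.2.1) ?_ ?_
    · exact Close.of_le ((hb1 _ hi _ hj z hz' 0 h0L).2.1.trans hMR)
        ((hb2 _ hi _ hj z hz' 0 h0L).2.1.trans hMR) (hl k hk).2.1 hR1 hE
    · exact Close.of_le ((hτ1 _ hi _ hj z hz').2.1.trans hMR)
        ((hτ2 _ hi _ hj z hz').2.1.trans hMR) (hl k hk).2.2.2 hR1 hE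
  have dτ : ∀ f : ℝ → ℝ, ContDiff ℝ 2 f → (∀ z, HasDerivAt f (deriv f z) z) ∧
      ∀ z, HasDerivAt (deriv f) (iteratedDeriv 2 f z) z := by
    intro f hf
    refine ⟨fun z => (hf.differentiable (by norm_num) z).hasDerivAt, fun z => ?_⟩
    rw [iteratedDeriv_succ, iteratedDeriv_one]
    have h1 : ContDiff ℝ 1 (deriv f) := hf.deriv'
    exact (h1.differentiable (by norm_num) z).hasDerivAt
  have hSle : ∀ k ∈ S, k.1 ≤ N + 1 ∧ k.2 ≤ N + 1 := by
    intro k hk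
    have := (hmem k).1 hk
    omega
  have ew0 : ∀ k ∈ S, ∀ t ∈ Icc (0:ℝ) L, w₁ k.1 k.2 0 t - w₂ k.1 k.2 0 t = 0 := by
    intro k hk t ht
    obtain ⟨⟨hi1, hiN⟩, hj1, hjN⟩ := (hmem k).1 hk
    rw [(ic1 _ hi1 hiN _ hj1 hjN t ht).1, (ic2 _ hi1 hiN _ hj1 hjN t ht).1, sub_self]
  have main := propagation S L n₀ (|CT| + |CW| + 2 * M) M hn₀0.le (by linarith) (by positivity)
    hM.le
    (fun k p => w₁ k.1 k.2 p.1 p.2 - w₂ k.1 k.2 p.1 p.2)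
    (fun k p => dzv w₁ k.1 k.2 p.1 p.2 - dzv w₂ k.1 k.2 p.1 p.2)
    (fun k p => dtv w₁ k.1 k.2 p.1 p.2 - dtv w₂ k.1 k.2 p.1 p.2)
    (fun k p => gradDz (w₁ k.1 k.2) p - gradDz (w₂ k.1 k.2) p)
    (fun k z => τ₁ k.1 k.2 z - τ₂ k.1 k.2 z)
    (fun k z => deriv (τ₁ k.1 k.2) z - deriv (τ₂ k.1 k.2) z)
    (fun k z => iteratedDeriv 2 (τ₁ k.1 k.2) z - iteratedDeriv 2 (τ₂ k.1 k.2) z)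
    (fun k => τ₁ k.1 k.2) (fun k => deriv (τ₁ k.1 k.2)) (fun k => iteratedDeriv 2 (τ₁ k.1 k.2))
    (fun k hk => (cw1 _ (hSle k hk).1 _ (hSle k hk).2).continuous.sub
      (cw2 _ (hSle k hk).1 _ (hSle k hk).2).continuous)
    (fun k hk => (r1 _ (hSle k hk).1 _ (hSle k hk).2).2.2.1.sub
      (r2 _ (hSle k hk).1 _ (hSle k hk).2).2.2.1)
    (fun k hk z t => ((r1 _ (hSle k hk).1 _ (hSle k hk).2).1 z t).sub
      ((r2 _ (hSle k hk).1 _ (hSle k hk).2).1 z t))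
    (fun k hk p => ((r1 _ (hSle k hk).1 _ (hSle k hk).2).2.2.2.1 p).sub
      ((r2 _ (hSle k hk).1 _ (hSle k hk).2).2.2.2.1 p))
    (fun k hk z t => ((r1 _ (hSle k hk).1 _ (hSle k hk).2).2.2.2.2.2.2 z t).sub
      ((r2 _ (hSle k hk).1 _ (hSle k hk).2).2.2.2.2.2.2 z t))
    (fun k hk z => ((dτ _ (ct1 _ (hSle k hk).1 _ (hSle k hk).2)).1 z).sub
      ((dτ _ (ct2 _ (hSle k hk).1 _ (hSle k hk).2)).1 z))
    (fun k hk z => ((dτ _ (ct1 _ (hSle k hk).1 _ (hSle k hk).2)).2 z).sub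
      ((dτ _ (ct2 _ (hSle k hk).1 _ (hSle k hk).2)).2 z))
    (fun k hk z => (dτ _ (ct1 _ (hSle k hk).1 _ (hSle k hk).2)).1 z)
    (fun k hk z => (dτ _ (ct1 _ (hSle k hk).1 _ (hSle k hk).2)).2 z)
    (fun k hk z hz => hd1 _ (hSle k hk).1 _ (hSle k hk).2 z hz)
    (fun k hk z hz => (hτ1 _ (hSle k hk).1 _ (hSle k hk).2 z hz).2.2)
    ew0 ?hP0 ?hQ0 ?hT0 ?hT10 ?hpde ?hode
  case hP0 =>
    intro k hk t ht
    obtain ⟨⟨hi1, hiN⟩, hj1, hjN⟩ := (hmem k).1 hk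
    simp only
    rw [(ic1 _ hi1 hiN _ hj1 hjN t ht).2, (ic2 _ hi1 hiN _ hj1 hjN t ht).2, sub_self]
  case hQ0 =>
    intro k hk t ht
    have hi := hSle k hk
    have hopen : EqOn (fun t => dtv w₁ k.1 k.2 0 t) (fun t => dtv w₂ k.1 k.2 0 t) (Ioo 0 L) := by
      intro s hs
      apply Filter.EventuallyEq.deriv_eq
      filter_upwards [isOpen_Ioo.mem_nhds hs] with u hu
      exact sub_eq_zero.1 (ew0 k hk u (Ioo_subset_Icc_self hu))
    have hcl := hopen.closure
      ((r1 _ hi.1 _ hi.2).2.2.1.comp (by fun_prop : Continuous fun t : ℝ => ((0:ℝ), t)))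
      ((r2 _ hi.1 _ hi.2).2.2.1.comp (by fun_prop : Continuous fun t : ℝ => ((0:ℝ), t)))
    rw [closure_Ioo hL0.ne] at hcl
    exact sub_eq_zero.2 (hcl ht)
  case hT0 =>
    intro k hk
    obtain ⟨⟨hi1, hiN⟩, hj1, hjN⟩ := (hmem k).1 hk
    rw [(tic1 _ hi1 hiN _ hj1 hjN).1, (tic2 _ hi1 hiN _ hj1 hjN).1, sub_self]
  case hT10 =>
    intro k hk
    obtain ⟨⟨hi1, hiN⟩, hj1, hjN⟩ := (hmem k).1 hk
    rw [(tic1 _ hi1 hiN _ hj1 hjN).2, (tic2 _ hi1 hiN _ hj1 hjN).2, sub_self]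
  case hpde =>
    intro k hk z hz t ht E hE hl
    have hi := hSle k hk
    have hz' := Ioo_subset_Icc_self hz
    have ht' := Ioo_subset_Icc_self ht
    obtain ⟨⟨hi1, hiN⟩, hj1, hjN⟩ := (hmem k).1 hk
    have hdot := closedot k hk z hz E hE fun l hl' =>
      ⟨(hl l hl').2.2.1, (hl l hl').2.2.2.1, (hl l hl').2.2.2.2.1, (hl l hl').2.2.2.2.2⟩
    have hF := (hCW E w₁ w₂ τ₁ τ₂ k.1 k.2 z t hi1 hiN hj1 hjN
      (closeτ z hz E hE fun l hl' => (hl l hl').2.2.2.2.1)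
      (closew z hz t ht' E hE fun l hl' => (hl l hl').1)
      (closeq z hz t ht E hE fun l hl' => (hl l hl').2.1) hdot).2.2
    have e1 : dzzv w₁ k.1 k.2 z t - 2 * deriv (τ₁ k.1 k.2) z * dztv w₁ k.1 k.2 z t
        = rhsW h w₁ τ₁ k.1 k.2 z t := by
      have := pde1 k.1 hi1 hiN k.2 hj1 hjN z hz t ht
      simp only [lapH] at this
      simp only [rhsW]
      linear_combination this
    have e2 : dzzv w₂ k.1 k.2 z t - 2 * deriv (τ₂ k.1 k.2) z * dztv w₂ k.1 k.2 z t
        = rhsW h w₂ τ₂ k.1 k.2 z t := by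
      have := pde2 k.1 hi1 hiN k.2 hj1 hjN z hz t ht
      simp only [lapH] at this
      simp only [rhsW]
      linear_combination this
    have z1 : gradDz (w₁ k.1 k.2) (z, t) (1, 0) = dzzv w₁ k.1 k.2 z t :=
      (r1 _ hi.1 _ hi.2).2.2.2.2.1 z t
    have z2 : gradDz (w₂ k.1 k.2) (z, t) (1, 0) = dzzv w₂ k.1 k.2 z t :=
      (r2 _ hi.1 _ hi.2).2.2.2.2.1 z t
    have t1 : gradDz (w₁ k.1 k.2) (z, t) (0, 1) = dztv w₁ k.1 k.2 z t :=
      (r1 _ hi.1 _ hi.2).2.2.2.2.2.1 z t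
    have t2 : gradDz (w₂ k.1 k.2) (z, t) (0, 1) = dztv w₂ k.1 k.2 z t :=
      (r2 _ hi.1 _ hi.2).2.2.2.2.2.1 z t
    simp only [sub_apply, z1, z2, t1, t2]
    -- `∂_z∂_t w₂` is bounded by `M`, which controls the variation of the principal coefficient
    have e : dzzv w₁ k.1 k.2 z t - dzzv w₂ k.1 k.2 z t
        - 2 * deriv (τ₁ k.1 k.2) z * (dztv w₁ k.1 k.2 z t - dztv w₂ k.1 k.2 z t)
        = (rhsW h w₁ τ₁ k.1 k.2 z t - rhsW h w₂ τ₂ k.1 k.2 z t)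
          + 2 * ((deriv (τ₁ k.1 k.2) z - deriv (τ₂ k.1 k.2) z) * dztv w₂ k.1 k.2 z t) := by
      linear_combination e1 - e2
    rw [e]
    have hm : |(deriv (τ₁ k.1 k.2) z - deriv (τ₂ k.1 k.2) z) * dztv w₂ k.1 k.2 z t| ≤ E * M := by
      rw [abs_mul]
      exact mul_le_mul (hl k hk).2.2.2.2.2 (hb2 _ hi.1 _ hi.2 z hz' t ht').2.2.2
        (abs_nonneg _) hE
    have hm2 := abs_add_le (rhsW h w₁ τ₁ k.1 k.2 z t - rhsW h w₂ τ₂ k.1 k.2 z t)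
      (2 * ((deriv (τ₁ k.1 k.2) z - deriv (τ₂ k.1 k.2) z) * dztv w₂ k.1 k.2 z t))
    rw [abs_mul 2, abs_two] at hm2
    have h1 : CW * E ≤ |CW| * E := mul_le_mul_of_nonneg_right (le_abs_self _) hE
    have h2 : 0 ≤ |CT| * E := by positivity
    linarith
  case hode =>
    intro k hk z hz E hE hl
    obtain ⟨⟨hi1, hiN⟩, hj1, hjN⟩ := (hmem k).1 hk
    have hdot := closedot k hk z hz E hE hl
    have hF := (hCT E w₁ w₂ τ₁ τ₂ k.1 k.2 z hi1 hiN hj1 hjN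
      (closeτ z hz E hE fun l hl' => (hl l hl').2.2.1) hdot).2.2
    have e1 : iteratedDeriv 2 (τ₁ k.1 k.2) z = rhsT h w₁ τ₁ k.1 k.2 z := by
      have := ode1 k.1 hi1 hiN k.2 hj1 hjN z hz
      simp only [lapHz] at this
      simp only [rhsT]
      linear_combination this
    have e2 : iteratedDeriv 2 (τ₂ k.1 k.2) z = rhsT h w₂ τ₂ k.1 k.2 z := by
      have := ode2 k.1 hi1 hiN k.2 hj1 hjN z hz
      simp only [lapHz] at this
      simp only [rhsT]
      linear_combination this
    simp only [e1, e2]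
    have h1 : CT * E ≤ |CT| * E := mul_le_mul_of_nonneg_right (le_abs_self _) hE
    have h2 : 0 ≤ |CW| * E := by positivity
    have h3 : 0 ≤ 2 * M * E := by positivity
    linarith
  have hdom : ∀ z ∈ Icc (0:ℝ) 1, ∀ t ≤ 1 / α, t ≤ L - 2 * n₀ * z := by
    intro z hz t ht
    nlinarith [hz.2]
  have hτeq : ∀ i ≤ N + 1, ∀ j ≤ N + 1, ∀ z ∈ Icc (0:ℝ) 1, τ₁ i j z = τ₂ i j z := by
    intro i hi j hj z hz
    rcases hcases i hi j hj with hint | hbd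
    · exact sub_eq_zero.1
        (main (i, j) ((hmem _).2 hint) z hz 0 le_rfl (hdom z hz 0 hα1.le)).2.1
    · rw [tbc1 i hi j hj hbd z hz, tbc2 i hi j hj hbd z hz]
  refine ⟨fun i hi1 hiN j hj1 hjN z hz t ht => ?_, fun i hi1 hiN j hj1 hjN z hz => ?_,
    fun i hi1 hiN j hj1 hjN z hz => ?_⟩
  · exact sub_eq_zero.1 (main (i, j) ((hmem _).2 ⟨⟨hi1, hiN⟩, hj1, hjN⟩) z hz t ht.1
      (hdom z hz t ht.2)).1
  · exact hτeq i (by omega) j (by omega) z hz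
  · have hder : deriv (τ₁ i j) z = deriv (τ₂ i j) z := sub_eq_zero.1
      (main (i, j) ((hmem _).2 ⟨⟨hi1, hiN⟩, hj1, hjN⟩) z hz 0 le_rfl (hdom z hz 0 hα1.le)).2.2
    simp only [gradHnorm, gradH, hder, hτeq (i - 1) (by omega) j (by omega) z hz,
      hτeq (i + 1) (by omega) j (by omega) z hz, hτeq i (by omega) (j - 1) (by omega) z hz,
      hτeq i (by omega) (j + 1) (by omega) z hz]
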